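/- arXiv:1407.7787 — 2 statements merged into one kernel-verified Lean document; each statement's English description precedes it below -/
import Mathlib

section
/- In the halving setting, for every n ≥ 1 one has O_{T̄}(n) = O^h_T(2n) + (1/2)·O^g_T(n) + O^s_T(n), where O_{T̄}(n) is the number of closed orbits of length n under T̄. -/
open Function

/-- `F_T(n)`: the number of points of period `n`, i.e. of `x` with `T^[n] x = x`. -/
noncomputable def numPer {X : Type*} (T : X → X) (n : ℕ) : ℕ :=
  Nat.card {x : X // T^[n] x = x}

/-- `τ` is a closed orbit of length `n` under `T`: a set of the form
`{x, T x, …, T^[n-1] x}` of cardinality exactly `n` with `T^[n] x = x`. -/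
def IsClosedOrbit {X : Type*} (T : X → X) (n : ℕ) (τ : Set X) : Prop :=
  ∃ x : X, T^[n] x = x ∧ τ = {y | ∃ k < n, T^[k] x = y} ∧ τ.ncard = n

/-- `O_T(n)`: the number of closed orbits of length `n` under `T`. -/
noncomputable def numOrb {X : Type*} (T : X → X) (n : ℕ) : ℕ :=
  Nat.card {τ : Set X // IsClosedOrbit T n τ}

/-- The quotient `X̄` of `X` by the equivalence relation `x ∼ ι x`
(it carries the quotient topology). -/
abbrev HalfQuot {X : Type*} (ι : X → X) : Type _ := Quot (fun x y : X => ι x = y)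

/-- The quotient map `π : X → X̄`. -/
abbrev halfProj {X : Type*} (ι : X → X) : X → HalfQuot ι := Quot.mk _

/-- The closed orbit `τ` survives: `ι` fixes it pointwise. -/
def OrbitSurvives {X : Type*} (ι : X → X) (τ : Set X) : Prop := ∀ x ∈ τ, ι x = x

/-- The closed orbit `τ` (of length `n` under `T`) is glued:
`ι '' τ` is a closed orbit of length `n` disjoint from `τ`. -/
def OrbitGlued {X : Type*} (T ι : X → X) (n : ℕ) (τ : Set X) : Prop :=
  IsClosedOrbit T n (ι '' τ) ∧ Disjoint τ (ι '' τ)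

/-- The closed orbit `τ` is halved: `ι '' τ = τ` but `ι` is not the identity on `τ`. -/
def OrbitHalved {X : Type*} (ι : X → X) (τ : Set X) : Prop :=
  ι '' τ = τ ∧ ¬ OrbitSurvives ι τ

/-- `O^s_T(n)`: the number of closed orbits of length `n` under `T` that survive. -/
noncomputable def numSurv {X : Type*} (T ι : X → X) (n : ℕ) : ℕ :=
  Nat.card {τ : Set X // IsClosedOrbit T n τ ∧ OrbitSurvives ι τ}

/-- `O^g_T(n)`: the number of closed orbits of length `n` under `T` that are glued. -/
noncomputable def numGlued {X : Type*} (T ι : X → X) (n : ℕ) : ℕ :=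
  Nat.card {τ : Set X // IsClosedOrbit T n τ ∧ OrbitGlued T ι n τ}

/-- `O^h_T(n)`: the number of closed orbits of length `n` under `T` that are halved. -/
noncomputable def numHalf {X : Type*} (T ι : X → X) (n : ℕ) : ℕ :=
  Nat.card {τ : Set X // IsClosedOrbit T n τ ∧ OrbitHalved ι τ}

/-- The first `n` points of the forward orbit. -/
def orbSeg {X : Type*} (S : X → X) (n : ℕ) (x : X) : Set X := {y | ∃ k < n, S^[k] x = y}

lemma ncard_fiber {α β : Type*} (f : α → β) (A : Set α) (k : ℕ) (hk : 1 ≤ k)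
    (h : ∀ x ∈ A, {y | y ∈ A ∧ f y = f x}.ncard = k) : A.ncard = (f '' A).ncard * k := by
  have e1 : ∀ b : (f '' A : Set β), Nonempty ({y | y ∈ A ∧ f y = b.1} ≃ Fin k) := by
    rintro ⟨b, x, hx, rfl⟩
    have h1 : Nat.card ({y | y ∈ A ∧ f y = f x} : Set α) = k := by
      rw [Nat.card_coe_set_eq]; exact h x hx
    have : Finite ({y | y ∈ A ∧ f y = f x} : Set α) := Nat.finite_of_card_ne_zero (by omega)
    exact ⟨Finite.equivFinOfCardEq h1⟩
  have e := fun b => (e1 b).some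
  have e2 : A ≃ (Σ b : (f '' A : Set β), {y | y ∈ A ∧ f y = b.1}) :=
    { toFun := fun x => ⟨⟨f x, x, x.2, rfl⟩, x, x.2, rfl⟩
      invFun := fun p => ⟨p.2.1, p.2.2.1⟩
      left_inv := fun x => rfl
      right_inv := by
        rintro ⟨⟨b, hb⟩, y, hy, hyb⟩
        simp only at hyb
        subst hyb
        rfl }
  have e3 : A ≃ (f '' A : Set β) × Fin k :=
    e2.trans ((Equiv.sigmaCongrRight e).trans (Equiv.sigmaEquivProd _ _))
  have := Nat.card_congr e3
  rw [Nat.card_prod, Nat.card_coe_set_eq, Nat.card_coe_set_eq, Nat.card_eq_fintype_card,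
    Fintype.card_fin] at this
  exact this

lemma orbSeg_eq_image {X : Type*} (S : X → X) (n : ℕ) (x : X) :
    orbSeg S n x = (fun k => S^[k] x) '' Set.Iio n := by
  ext y; simp [orbSeg]

lemma ncard_orbSeg {X : Type*} (S : X → X) (n : ℕ) (x : X) (h : minimalPeriod S x = n) :
    (orbSeg S n x).ncard = n := by
  rw [orbSeg_eq_image, Set.InjOn.ncard_image]
  · simp
  · rw [← h]; exact iterate_injOn_Iio_minimalPeriod

lemma iterate_mem_orbSeg {X : Type*} (S : X → X) (n : ℕ) (hn : 1 ≤ n) (x : X) (h : S^[n] x = x)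
    (k : ℕ) : S^[k] x ∈ orbSeg S n x :=
  ⟨k % n, Nat.mod_lt _ hn, IsPeriodicPt.iterate_mod_apply h k⟩

lemma self_mem_orbSeg {X : Type*} (S : X → X) (n : ℕ) (hn : 1 ≤ n) (x : X) :
    x ∈ orbSeg S n x := ⟨0, hn, rfl⟩

lemma minPer_of_ncard {X : Type*} (S : X → X) (n : ℕ) (hn : 1 ≤ n) (x : X) (h : S^[n] x = x)
    (hc : (orbSeg S n x).ncard = n) : minimalPeriod S x = n := by
  have hd : minimalPeriod S x ∣ n := IsPeriodicPt.minimalPeriod_dvd h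
  have hpos : 1 ≤ minimalPeriod S x := Nat.pos_of_dvd_of_pos hd hn
  apply le_antisymm (Nat.le_of_dvd hn hd)
  have hsub : orbSeg S n x ⊆ orbSeg S (minimalPeriod S x) x := by
    rintro y ⟨k, -, rfl⟩
    exact iterate_mem_orbSeg S _ hpos x (isPeriodicPt_minimalPeriod S x) k
  have hf : (orbSeg S (minimalPeriod S x) x).Finite := by
    rw [orbSeg_eq_image]; exact (Set.finite_Iio _).image _
  have := Set.ncard_le_ncard hsub hf
  rw [hc, ncard_orbSeg S _ x rfl] at this
  exact this

lemma minPer_of_dvd {X : Type*} (S : X → X) (n : ℕ) (x : X)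
    (h : ∀ k, S^[k] x = x ↔ n ∣ k) : minimalPeriod S x = n := by
  apply Nat.dvd_antisymm
  · exact IsPeriodicPt.minimalPeriod_dvd ((h n).2 dvd_rfl)
  · exact (h _).1 (isPeriodicPt_minimalPeriod S x)

lemma iter_iff {X : Type*} (S : X → X) (n : ℕ) (x : X) (h : minimalPeriod S x = n) (k : ℕ) :
    S^[k] x = x ↔ n ∣ k := by
  rw [← h]; exact isPeriodicPt_iff_minimalPeriod_dvd

lemma orbSeg_eq {X : Type*} (S : X → X) (n : ℕ) (hn : 1 ≤ n) (x y : X) (h : S^[n] x = x)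
    (hy : y ∈ orbSeg S n x) : S^[n] y = y ∧ orbSeg S n y = orbSeg S n x := by
  obtain ⟨k, hk, rfl⟩ := hy
  have h1 : S^[n] (S^[k] x) = S^[k] x := by
    rw [← iterate_add_apply, add_comm, iterate_add_apply, h]
  refine ⟨h1, Set.Subset.antisymm ?_ ?_⟩
  · rintro z ⟨j, hj, rfl⟩
    rw [← iterate_add_apply]
    exact iterate_mem_orbSeg S n hn x h _
  · rintro z ⟨j, hj, rfl⟩
    have : S^[j] x = S^[j + (n - k)] (S^[k] x) := by
      rw [← iterate_add_apply, add_assoc, Nat.sub_add_cancel hk.le, iterate_add_apply, h]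
    rw [this]
    exact iterate_mem_orbSeg S n hn _ h1 _

lemma closedOrbit_iff {X : Type*} (S : X → X) (n : ℕ) (hn : 1 ≤ n) (τ : Set X) :
    IsClosedOrbit S n τ ↔ ∃ x, minimalPeriod S x = n ∧ orbSeg S n x = τ := by
  constructor
  · rintro ⟨x, h1, h2, h3⟩
    have h2' : τ = orbSeg S n x := h2
    subst h2'
    exact ⟨x, minPer_of_ncard S n hn x h1 h3, rfl⟩
  · rintro ⟨x, h1, rfl⟩
    exact ⟨x, (iter_iff S n x h1 n).2 dvd_rfl, rfl, ncard_orbSeg S n x h1⟩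

lemma count_points {X : Type*} (S : X → X) (n : ℕ) (hn : 1 ≤ n) (Q : Set X → Prop) :
    {x | minimalPeriod S x = n ∧ Q (orbSeg S n x)}.ncard =
      Nat.card {τ : Set X // IsClosedOrbit S n τ ∧ Q τ} * n := by
  have him : orbSeg S n '' {x | minimalPeriod S x = n ∧ Q (orbSeg S n x)} =
      {τ : Set X | IsClosedOrbit S n τ ∧ Q τ} := by
    ext τ
    simp only [Set.mem_image, Set.mem_ofPred_eq, closedOrbit_iff S n hn]
    constructor
    · rintro ⟨x, ⟨h1, h2⟩, rfl⟩
      exact ⟨⟨x, h1, rfl⟩, h2⟩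
    · rintro ⟨⟨x, h1, rfl⟩, h2⟩
      exact ⟨x, ⟨h1, h2⟩, rfl⟩
  rw [ncard_fiber (orbSeg S n) _ n hn, him]
  · rfl
  · rintro x ⟨h1, h2⟩
    have hx : S^[n] x = x := (iter_iff S n x h1 n).2 dvd_rfl
    have : {y | y ∈ {x | minimalPeriod S x = n ∧ Q (orbSeg S n x)} ∧
        orbSeg S n y = orbSeg S n x} = orbSeg S n x := by
      ext y
      constructor
      · rintro ⟨-, h4⟩
        rw [← h4]; exact self_mem_orbSeg S n hn y
      · intro hy
        obtain ⟨h3, h4⟩ := orbSeg_eq S n hn x y hx hy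
        refine ⟨⟨minPer_of_ncard S n hn y h3 ?_, ?_⟩, h4⟩
        · rw [h4]; exact ncard_orbSeg S n x h1
        · rw [h4]; exact h2
    rw [this]; exact ncard_orbSeg S n x h1

lemma halfProj_eq_iff {X : Type*} (ι : X → X) (hinv : ∀ x, ι (ι x) = x) (x y : X) :
    halfProj ι x = halfProj ι y ↔ y = x ∨ y = ι x := by
  constructor
  · intro h
    have := Quot.eqvGen_exact h
    induction this with
    | rel a b hab => right; exact hab.symm
    | refl a => left; rfl
    | symm a b _ ih =>
      rcases ih (Quot.eqvGen_sound (by assumption)) with h | h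
      · left; exact h.symm
      · right; rw [h, hinv]
    | trans a b c h1 h2 ih1 ih2 =>
      rcases ih1 (Quot.eqvGen_sound h1) with rfl | rfl <;>
        rcases ih2 (Quot.eqvGen_sound h2) with rfl | rfl <;> simp [hinv]
  · rintro (rfl | rfl)
    · rfl
    · exact Quot.sound rfl

theorem statement4
    {X : Type*} [MetricSpace X] [CompactSpace X]
    (T : X ≃ₜ X) (hfix : ∃ x : X, T x = x)
    (hfin : ∀ n : ℕ, 1 ≤ n → {x : X | (⇑T)^[n] x = x}.Finite)
    (ι : X → X) (hcont : Continuous ι) (hinv : ι ∘ ι = id)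
    (hcomm : ι ∘ ⇑T = ⇑T ∘ ι)
    (Tbar : HalfQuot ι → HalfQuot ι)
    (hTbar : ∀ x : X, Tbar (halfProj ι x) = halfProj ι (T x))
    :
    ∀ n : ℕ, 1 ≤ n →
      (numOrb Tbar n : ℚ) =
        numHalf (⇑T) ι (2 * n) + (1 / 2 : ℚ) * numGlued (⇑T) ι n + numSurv (⇑T) ι n := by
  intro n hn
  clear hfix hcont
  have hi : ∀ x, ι (ι x) = x := fun x => congrFun hinv x
  have hc : ∀ k x, ι ((⇑T)^[k] x) = (⇑T)^[k] (ι x) := fun k x =>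
    (Semiconj.iterate_right (f := ι) (ga := ⇑T) (gb := ⇑T) (fun x => congrFun hcomm x) k) x
  have hιinj : ∀ x y, ι x = ι y → x = y := fun x y h => by rw [← hi x, h, hi]
  have hbar : ∀ k x, Tbar^[k] (halfProj ι x) = halfProj ι ((⇑T)^[k] x) := fun k x =>
    ((Semiconj.iterate_right (f := halfProj ι) (ga := ⇑T) (gb := Tbar)
      (fun x => (hTbar x).symm) k) x).symm
  have hbariff : ∀ k x, Tbar^[k] (halfProj ι x) = halfProj ι x ↔
      (⇑T)^[k] x = x ∨ (⇑T)^[k] x = ι x := fun k x => by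
    rw [hbar, eq_comm, halfProj_eq_iff ι hi]
  have hmp : ∀ x, minimalPeriod (⇑T) (ι x) = minimalPeriod (⇑T) x := fun x => by
    apply minPer_of_dvd
    intro k
    rw [← hc, ← iter_iff (⇑T) _ x rfl k]
    exact ⟨hιinj _ _, fun h => by rw [h]⟩
  have himg : ∀ m x, ι '' orbSeg (⇑T) m x = orbSeg (⇑T) m (ι x) := by
    intro m x
    ext y
    constructor
    · rintro ⟨_, ⟨k, hk, rfl⟩, rfl⟩
      exact ⟨k, hk, (hc k x).symm⟩
    · rintro ⟨k, hk, rfl⟩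
      exact ⟨_, ⟨k, hk, rfl⟩, hc k x⟩
  -- pointwise characterizations
  have hS : {x | minimalPeriod (⇑T) x = n ∧ OrbitSurvives ι (orbSeg (⇑T) n x)} =
      {x | minimalPeriod (⇑T) x = n ∧ ι x = x} := by
    ext x
    refine and_congr_right fun h1 => ⟨fun h => h x (self_mem_orbSeg _ n hn x), ?_⟩
    rintro h _ ⟨k, hk, rfl⟩
    rw [hc, h]
  have hG : {x | minimalPeriod (⇑T) x = n ∧ OrbitGlued (⇑T) ι n (orbSeg (⇑T) n x)} =
      {x | minimalPeriod (⇑T) x = n ∧ ∀ k, (⇑T)^[k] x ≠ ι x} := by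
    ext x
    refine and_congr_right fun h1 => ?_
    have hx : (⇑T)^[n] x = x := (iter_iff _ n x h1 n).2 dvd_rfl
    have hx' : (⇑T)^[n] (ι x) = ι x := by rw [← hc, hx]
    constructor
    · rintro ⟨-, hd⟩ k hk
      rw [himg] at hd
      refine Set.disjoint_left.1 hd ?_ (self_mem_orbSeg _ n hn (ι x))
      rw [← hk]
      exact iterate_mem_orbSeg _ n hn x hx k
    · intro h
      unfold OrbitGlued
      rw [himg]
      refine ⟨(closedOrbit_iff _ n hn _).2 ⟨ι x, by rw [hmp, h1], rfl⟩, ?_⟩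
      rw [Set.disjoint_left]
      intro y hy hy'
      have e1 := (orbSeg_eq _ n hn x y hx hy).2
      have e2 := (orbSeg_eq _ n hn _ y hx' hy').2
      have : ι x ∈ orbSeg (⇑T) n x := by
        rw [← e1, e2]; exact self_mem_orbSeg _ n hn _
      obtain ⟨k, -, hk⟩ := this
      exact h k hk
  have hn2 : 1 ≤ 2 * n := by omega
  have hH : {x | minimalPeriod (⇑T) x = 2 * n ∧ OrbitHalved ι (orbSeg (⇑T) (2 * n) x)} =
      {x | minimalPeriod (⇑T) x = 2 * n ∧ (⇑T)^[n] x = ι x} := by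
    ext x
    refine and_congr_right fun h1 => ?_
    have hx : (⇑T)^[2 * n] x = x := (iter_iff _ _ x h1 _).2 dvd_rfl
    constructor
    · rintro ⟨h2, h3⟩
      rw [himg] at h2
      have : ι x ∈ orbSeg (⇑T) (2 * n) x := by
        rw [← h2]; exact self_mem_orbSeg _ _ hn2 _
      obtain ⟨k, hk, hkx⟩ := this
      have h4 : (⇑T)^[k + k] x = x := by
        rw [iterate_add_apply, hkx, ← hc, hkx, hi]
      rw [iter_iff _ _ x h1] at h4
      have hk0 : k ≠ 0 := by
        rintro rfl
        apply h3
        rintro _ ⟨j, hj, rfl⟩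
        rw [hc, ← hkx]; rfl
      obtain ⟨c, hc'⟩ := h4
      have : c = 1 := by
        have hc0 : c ≠ 0 := by rintro rfl; omega
        have : c < 2 := by
          by_contra hcc
          have : 2 * n * 2 ≤ 2 * n * c := Nat.mul_le_mul_left _ (by omega)
          omega
        omega
      subst this
      have : k = n := by omega
      rw [← this]; exact hkx
    · intro h
      have hmem : ι x ∈ orbSeg (⇑T) (2 * n) x := ⟨n, by omega, h⟩
      refine ⟨?_, ?_⟩
      · rw [himg]; exact (orbSeg_eq _ _ hn2 x _ hx hmem).2
      · intro hs
        have := hs x (self_mem_orbSeg _ _ hn2 x)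
        rw [← h, iter_iff _ _ x h1] at this
        have := Nat.le_of_dvd hn this
        omega
  have cS := count_points (⇑T) n hn (OrbitSurvives ι)
  have cG := count_points (⇑T) n hn (OrbitGlued (⇑T) ι n)
  have cH := count_points (⇑T) (2 * n) hn2 (OrbitHalved ι)
  have cB := count_points Tbar n hn (fun _ => True)
  rw [hS] at cS
  rw [hG] at cG
  rw [hH] at cH
  simp only [and_true] at cB
  set AS := {x | minimalPeriod (⇑T) x = n ∧ ι x = x} with hAS
  set AG := {x | minimalPeriod (⇑T) x = n ∧ ∀ k, (⇑T)^[k] x ≠ ι x} with hAG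
  set AH := {x | minimalPeriod (⇑T) x = 2 * n ∧ (⇑T)^[n] x = ι x} with hAH
  have fS : AS.Finite := (hfin n hn).subset fun x hx => (iter_iff _ n x hx.1 n).2 dvd_rfl
  have fG : AG.Finite := (hfin n hn).subset fun x hx => (iter_iff _ n x hx.1 n).2 dvd_rfl
  have fH : AH.Finite := (hfin _ hn2).subset fun x hx => (iter_iff _ _ x hx.1 _).2 dvd_rfl
  have hHne : ∀ x ∈ AH, ι x ≠ x := by
    rintro x ⟨h1, h2⟩ h
    rw [← h2, iter_iff _ _ x h1] at h
    have := Nat.le_of_dvd hn h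
    omega
  have two : ∀ A : Set X, (∀ x ∈ A, ι x ∈ A ∧ ι x ≠ x) →
      A.ncard = (halfProj ι '' A).ncard * 2 := by
    intro A hA
    apply ncard_fiber _ _ _ (by norm_num)
    intro x hx
    have : {y | y ∈ A ∧ halfProj ι y = halfProj ι x} = {x, ι x} := by
      ext y
      simp only [Set.mem_ofPred_eq, Set.mem_insert_iff, Set.mem_singleton_iff]
      rw [eq_comm (a := halfProj ι y), halfProj_eq_iff ι hi]
      constructor
      · exact fun h => h.2
      · rintro (rfl | rfl)
        · exact ⟨hx, Or.inl rfl⟩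
        · exact ⟨(hA x hx).1, Or.inr rfl⟩
    rw [this]
    exact Set.ncard_pair (hA x hx).2.symm
  have dG := two AG (by
    rintro x ⟨h1, h2⟩
    refine ⟨⟨by rw [hmp, h1], fun k hk => h2 k ?_⟩, fun h => h2 0 h.symm⟩
    rw [← hc] at hk
    exact hιinj _ _ hk)
  have dH := two AH (by
    intro x hx
    refine ⟨⟨by rw [hmp, hx.1], ?_⟩, hHne x hx⟩
    rw [← hc, hx.2])
  have dS : AS.ncard = (halfProj ι '' AS).ncard := by
    rw [Set.InjOn.ncard_image]
    intro x hx y hy hxy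
    rcases (halfProj_eq_iff ι hi x y).1 hxy with h | h
    · exact h.symm
    · rw [h, hx.2]
  have hB : {x | minimalPeriod Tbar x = n} =
      (halfProj ι '' AS ∪ halfProj ι '' AG) ∪ halfProj ι '' AH := by
    ext b
    constructor
    · obtain ⟨x, rfl⟩ := Quot.exists_rep b
      intro hb
      have key : ∀ k, ((⇑T)^[k] x = x ∨ (⇑T)^[k] x = ι x) ↔ n ∣ k := fun k => by
        rw [← hbariff]; exact iter_iff _ n _ hb k
      by_cases h1 : (⇑T)^[n] x = x
      · have hmul : ∀ k, n ∣ k → (⇑T)^[k] x = x := by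
          rintro k ⟨c, rfl⟩
          exact IsPeriodicPt.mul_const (f := ⇑T) (m := n) (x := x) h1 c
        have hmx : minimalPeriod (⇑T) x = n :=
          minPer_of_dvd _ _ _ fun k => ⟨fun h => (key k).1 (Or.inl h), hmul k⟩
        left
        by_cases h2 : ι x = x
        · left; exact ⟨x, ⟨hmx, h2⟩, rfl⟩
        · right
          refine ⟨x, ⟨hmx, fun k hk => h2 ?_⟩, rfl⟩
          rw [← hk]
          exact hmul k ((key k).1 (Or.inr hk))
      · right
        have h2 : (⇑T)^[n] x = ι x := ((key n).2 dvd_rfl).resolve_left h1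
        have h3 : (⇑T)^[2 * n] x = x := by
          rw [two_mul, iterate_add_apply, h2, ← hc, h2, hi]
        have hmul : ∀ c, (⇑T)^[2 * n * c] x = x := fun c =>
          IsPeriodicPt.mul_const (f := ⇑T) (m := 2 * n) (x := x) h3 c
        refine ⟨x, ⟨minPer_of_dvd _ _ _ fun k => ⟨fun h => ?_, ?_⟩, h2⟩, rfl⟩
        · obtain ⟨c, rfl⟩ := (key k).1 (Or.inl h)
          rcases Nat.even_or_odd' c with ⟨d, rfl | rfl⟩
          · exact ⟨d, by ring⟩
          · exfalso
            apply h1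
            rw [show n * (2 * d + 1) = n + 2 * n * d by ring, iterate_add_apply, hmul] at h
            exact h
        · rintro ⟨c, rfl⟩
          exact hmul c
    · rintro ((⟨x, ⟨h1, h2⟩, rfl⟩ | ⟨x, ⟨h1, h2⟩, rfl⟩) | ⟨x, ⟨h1, h2⟩, rfl⟩)
      · refine minPer_of_dvd _ _ _ fun k => ?_
        rw [hbariff, h2, or_self, iter_iff _ _ x h1]
      · refine minPer_of_dvd _ _ _ fun k => ?_
        rw [hbariff, or_iff_left (h2 k), iter_iff _ _ x h1]
      · refine minPer_of_dvd _ _ _ fun k => ?_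
        have hh : (⇑T)^[k] x = ι x ↔ 2 * n ∣ n + k := by
          rw [← iter_iff _ _ x h1, iterate_add_apply]
          constructor
          · intro h; rw [h, ← hc, h2, hi]
          · intro h
            rw [← iterate_add_apply, add_comm, iterate_add_apply, h2, ← hc] at h
            rw [← h, hi]; rw [h]
        rw [hbariff, hh, iter_iff _ _ x h1]
        constructor
        · rintro (h | h)
          · exact (Dvd.intro_left 2 rfl).trans h
          · exact (Nat.dvd_add_right dvd_rfl).1 ((Dvd.intro_left 2 rfl).trans h)
        · rintro ⟨c, rfl⟩
          rcases Nat.even_or_odd' c with ⟨d, rfl | rfl⟩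
          · left; exact ⟨d, by ring⟩
          · right; exact ⟨d + 1, by ring⟩
  have disj1 : Disjoint (halfProj ι '' AS) (halfProj ι '' AG) := by
    rw [Set.disjoint_left]
    rintro _ ⟨x, hx, rfl⟩ ⟨y, hy, hxy⟩
    have hyx : y = x := by
      rcases (halfProj_eq_iff ι hi x y).1 hxy.symm with h | h
      · exact h
      · rw [h, hx.2]
    subst hyx
    exact hy.2 0 hx.2.symm
  have disj2 : Disjoint (halfProj ι '' AS ∪ halfProj ι '' AG) (halfProj ι '' AH) := by
    rw [← Set.image_union, Set.disjoint_left]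
    rintro _ ⟨x, hx, rfl⟩ ⟨y, hy, hxy⟩
    have hxn : minimalPeriod (⇑T) x = n := by
      rcases hx with hx | hx <;> exact hx.1
    have hyn := hy.1
    rcases (halfProj_eq_iff ι hi x y).1 hxy.symm with rfl | rfl
    · omega
    · rw [hmp] at hyn; omega
  have total : {x | minimalPeriod Tbar x = n}.ncard =
      (halfProj ι '' AS).ncard + (halfProj ι '' AG).ncard + (halfProj ι '' AH).ncard := by
    rw [hB, Set.ncard_union_eq disj2 ((fS.image _).union (fG.image _)) (fH.image _),
      Set.ncard_union_eq disj1 (fS.image _) (fG.image _)]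
  have final : 2 * (numOrb Tbar n * n) =
      2 * (numSurv (⇑T) ι n * n) + numGlued (⇑T) ι n * n + numHalf (⇑T) ι (2 * n) * (2 * n) := by
    unfold numOrb numSurv numGlued numHalf
    rw [← cB, ← cS, ← cG, ← cH]
    omega
  have hnq : (n : ℚ) ≠ 0 := by
    have : n ≠ 0 := by omega
    exact_mod_cast this
  have fq : (2 : ℚ) * (numOrb Tbar n * n) =
      2 * (numSurv (⇑T) ι n * n) + numGlued (⇑T) ι n * n +
        numHalf (⇑T) ι (2 * n) * (2 * n) := by exact_mod_cast final
  apply mul_left_cancel₀ hnq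
  linarith
end

section
/- Let λ, η, c be positive real numbers with λ > 1 and such that one of the following holds: (i) η = λ and c ≥ 1/2; (ii) λ < η < λ²; (iii) η = λ² and 0 < c ≤ 1. Then there exist a topological dynamical system (X,T) and a continuous involution ι : X → X commuting with T such that O_T(n)/λ^n → 1 and O_{T̄}(n)/(c·η^n) → 1 as n → ∞, where (X̄,T̄) is the halved system. -/
open Function

/-! ### Analytic part -/

lemma tendsto_of_close (u f g : ℕ → ℝ) (K : ℝ) (hg : Filter.Tendsto g Filter.atTop Filter.atTop)
    (hf : Filter.Tendsto (fun n => f n / g n) Filter.atTop (nhds 1))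
    (h : ∀ n, |u n - f n| ≤ K) :
    Filter.Tendsto (fun n => u n / g n) Filter.atTop (nhds 1) := by
  have h0 : Filter.Tendsto (fun n => (u n - f n) / g n) Filter.atTop (nhds 0) := by
    have hK : Filter.Tendsto (fun n => K / g n) Filter.atTop (nhds 0) :=
      hg.const_div_atTop K
    refine squeeze_zero_norm' ?_ hK
    filter_upwards [hg.eventually_gt_atTop 0] with n hn
    rw [Real.norm_eq_abs, abs_div, abs_of_pos hn]
    exact div_le_div_of_nonneg_right (h n) hn.le
  have := hf.add h0
  simp only [add_zero] at this
  refine this.congr fun n => ?_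
  ring

lemma floor_close (x : ℝ) (hx : 0 ≤ x) : |((⌊x⌋₊ : ℕ) : ℝ) - x| ≤ 1 := by
  rw [abs_le]
  constructor
  · linarith [Nat.lt_floor_add_one x]
  · linarith [Nat.floor_le hx]

/-- Passing from real sequences to integer sequences. -/
lemma exists_seqs_of_real (lam eta c : ℝ) (hlam : 1 < lam) (heta : 1 < eta) (hc : 0 < c)
    (B D : ℕ → ℝ) (hB : ∀ n, 0 ≤ B n) (hD : ∀ n, 0 ≤ D n)
    (h1 : Filter.Tendsto (fun n : ℕ => (2 * B n + (if Even n then D (n / 2) else 0)) / lam ^ n)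
      Filter.atTop (nhds 1))
    (h2 : Filter.Tendsto (fun n : ℕ => (B n + D n) / (c * eta ^ n)) Filter.atTop (nhds 1)) :
    ∃ b e : ℕ → ℕ, (∀ n, e n ≠ 0 → Even n) ∧
      Filter.Tendsto (fun n : ℕ => ((2 * b n + e n : ℕ) : ℝ) / lam ^ n) Filter.atTop (nhds 1) ∧
      Filter.Tendsto (fun n : ℕ => ((b n + e (2 * n) : ℕ) : ℝ) / (c * eta ^ n))
        Filter.atTop (nhds 1) := by
  refine ⟨fun n => ⌊B n⌋₊, fun n => if Even n then ⌊D (n / 2)⌋₊ else 0, ?_, ?_, ?_⟩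
  · intro n hn
    by_contra h
    simp [h] at hn
  · refine tendsto_of_close _ _ _ 3 (tendsto_pow_atTop_atTop_of_one_lt hlam) h1 fun n => ?_
    have hb := abs_le.1 (floor_close _ (hB n))
    have hd := abs_le.1 (floor_close _ (hD (n / 2)))
    rw [abs_le]
    by_cases h : Even n
    · simp only [h, if_true]
      push_cast
      constructor <;> linarith [hb.1, hb.2, hd.1, hd.2]
    · simp only [h, if_false]
      push_cast
      constructor <;> linarith [hb.1, hb.2, hd.1, hd.2]
  · refine tendsto_of_close _ _ _ 3
      ((tendsto_pow_atTop_atTop_of_one_lt heta).const_mul_atTop hc) h2 fun n => ?_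
    have hb := abs_le.1 (floor_close _ (hB n))
    have hd := abs_le.1 (floor_close _ (hD n))
    have h2n : 2 * n / 2 = n := by omega
    simp only [even_two_mul, if_true, h2n]
    push_cast
    rw [abs_le]
    constructor <;> linarith [hb.1, hb.2, hd.1, hd.2]

lemma tendsto_pow_div_pow {a b : ℝ} (ha : 0 ≤ a) (hab : a < b) :
    Filter.Tendsto (fun n : ℕ => a ^ n / b ^ n) Filter.atTop (nhds 0) := by
  have hb : 0 < b := lt_of_le_of_lt ha hab
  simp only [← div_pow]
  exact tendsto_pow_atTop_nhds_zero_of_lt_one (by positivity) ((div_lt_one hb).2 hab)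

lemma tendsto_first {lam eta C : ℝ} (hlam : 1 < lam) (heta : 0 < eta) (hlt : eta < lam ^ 2)
    (hC : 0 ≤ C) :
    Filter.Tendsto (fun n : ℕ => (2 * (lam ^ n / 2) +
      (if Even n then C * eta ^ (n / 2) else 0)) / lam ^ n) Filter.atTop (nhds 1) := by
  have hs : √eta < lam := by
    rw [Real.sqrt_lt' (by linarith)]
    exact hlt
  have h0 : Filter.Tendsto (fun n : ℕ => (if Even n then C * eta ^ (n / 2) else 0) / lam ^ n)
      Filter.atTop (nhds 0) := by
    have := (tendsto_pow_div_pow (Real.sqrt_nonneg eta) hs).const_mul C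
    rw [mul_zero] at this
    refine squeeze_zero (fun n => ?_) (fun n => ?_) this
    · split_ifs <;> positivity
    · rw [← mul_div_assoc]
      apply div_le_div_of_nonneg_right _ (by positivity)
      split_ifs with h
      · obtain ⟨m, rfl⟩ := h
        have e1 : (m + m) / 2 = m := by omega
        rw [e1, ← two_mul, pow_mul, Real.sq_sqrt heta.le]
      · positivity
  have := h0.const_add 1
  rw [add_zero] at this
  refine this.congr fun n => ?_
  have : lam ^ n ≠ 0 := by positivity
  field_simp

lemma tendsto_second {lam eta c : ℝ} (hlam : 1 < lam) (hlt : lam < eta) (hc : 0 < c)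
    (B : ℕ → ℝ) (hB : ∀ n, 0 ≤ B n) (hB' : ∀ n, B n ≤ lam ^ n / 2) :
    Filter.Tendsto (fun n : ℕ => (B n + c * eta ^ n) / (c * eta ^ n))
      Filter.atTop (nhds 1) := by
  have h0 : Filter.Tendsto (fun n : ℕ => B n / (c * eta ^ n)) Filter.atTop (nhds 0) := by
    have := (tendsto_pow_div_pow (by linarith) hlt).const_mul (1 / (2 * c))
    rw [mul_zero] at this
    have he : 0 < eta := by linarith
    refine squeeze_zero (fun n => ?_) (fun n => ?_) this
    · have := hB n
      positivity
    · calc B n / (c * eta ^ n) ≤ (lam ^ n / 2) / (c * eta ^ n) :=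
            div_le_div_of_nonneg_right (hB' n) (by positivity)
        _ = _ := by field_simp
  have := h0.const_add 1
  rw [add_zero] at this
  refine this.congr fun n => ?_
  have he : 0 < eta := by linarith
  have : eta ^ n ≠ 0 := by positivity
  field_simp
  ring

lemma exists_seqs (lam eta c : ℝ) (hlam : 1 < lam) (hc : 0 < c)
    (hcase : (eta = lam ∧ (1 / 2 : ℝ) ≤ c) ∨ (lam < eta ∧ eta < lam ^ 2) ∨
      (eta = lam ^ 2 ∧ c ≤ 1)) :
    ∃ b e : ℕ → ℕ, (∀ n, e n ≠ 0 → Even n) ∧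
      Filter.Tendsto (fun n : ℕ => ((2 * b n + e n : ℕ) : ℝ) / lam ^ n) Filter.atTop (nhds 1) ∧
      Filter.Tendsto (fun n : ℕ => ((b n + e (2 * n) : ℕ) : ℝ) / (c * eta ^ n))
        Filter.atTop (nhds 1) := by
  have hl0 : 0 < lam := by linarith
  rcases hcase with ⟨rfl, h⟩ | ⟨h, h'⟩ | ⟨rfl, h⟩
  · refine exists_seqs_of_real eta eta c hlam hlam hc (fun n => eta ^ n / 2)
      (fun n => (c - 1 / 2) * eta ^ n) (fun n => by positivity)
      (fun n => mul_nonneg (by linarith) (by positivity)) ?_ ?_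
    · exact tendsto_first hlam hl0 (by nlinarith) (by linarith)
    · refine tendsto_const_nhds.congr fun n => ?_
      have : eta ^ n ≠ 0 := by positivity
      field_simp
      ring
  · have he : 0 < eta := by linarith
    refine exists_seqs_of_real lam eta c hlam (by linarith) hc (fun n => lam ^ n / 2)
      (fun n => c * eta ^ n) (fun n => by positivity) (fun n => by positivity) ?_ ?_
    · exact tendsto_first hlam he h' hc.le
    · exact tendsto_second hlam h hc _ (fun n => by positivity) (fun n => le_rfl)
  · have hB : ∀ n, 0 ≤ (if Even n then (1 - c) / 2 * lam ^ n else lam ^ n / 2) := by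
      intro n
      split_ifs
      · exact mul_nonneg (by linarith) (by positivity)
      · positivity
    refine exists_seqs_of_real lam (lam ^ 2) c hlam (by nlinarith) hc
      (fun n => if Even n then (1 - c) / 2 * lam ^ n else lam ^ n / 2)
      (fun n => c * (lam ^ 2) ^ n) hB (fun n => by positivity) ?_ ?_
    · refine tendsto_const_nhds.congr fun n => ?_
      have : lam ^ n ≠ 0 := by positivity
      by_cases h : Even n
      · simp only [h, if_true]
        obtain ⟨m, rfl⟩ := h
        have e1 : (m + m) / 2 = m := by omega
        rw [e1, ← pow_mul, two_mul]
        field_simp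
        ring
      · simp only [h, if_false]
        field_simp
        ring
    · refine tendsto_second hlam (by nlinarith) hc _ hB fun n => ?_
      have : 0 < lam ^ n := by positivity
      split_ifs
      · nlinarith
      · exact le_rfl

/-! ### Counting closed orbits by representatives -/

lemma numOrb_eq_card {X I : Type*} (S : X → X) (n : ℕ) (hn : 1 ≤ n) (r : I → X)
    (h1 : ∀ i k, S^[k] (r i) = r i ↔ n ∣ k)
    (h2 : ∀ i j k, S^[k] (r i) = r j → i = j)
    (h3 : ∀ x, (∀ k, S^[k] x = x ↔ n ∣ k) → ∃ i k, S^[k] (r i) = x) :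
    numOrb S n = Nat.card I := by
  have himg : ∀ x, {y | ∃ k < n, S^[k] x = y} = (fun k => S^[k] x) '' Set.Iio n := by
    intro x
    ext y
    simp
  have hinj : ∀ x, S^[n] x = x → ((∀ k, S^[k] x = x ↔ n ∣ k) ↔
      Set.InjOn (fun k => S^[k] x) (Set.Iio n)) := by
    intro x hx
    constructor
    · intro h
      have aux : ∀ k l, k ≤ l → l < n → S^[k] x = S^[l] x → k = l := by
        intro k l hkl hl hE
        have h4 : S^[n - l + k] x = x := by
          rw [iterate_add_apply, hE, ← iterate_add_apply, Nat.sub_add_cancel hl.le, hx]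
        have := Nat.le_of_dvd (by omega) ((h _).1 h4)
        omega
      intro k hk l hl hE
      rcases le_total k l with hkl | hkl
      · exact aux k l hkl hl hE
      · exact (aux l k hkl hk hE.symm).symm
    · intro h k
      have hp : IsPeriodicPt S n x := hx
      constructor
      · intro hk
        have hm : S^[k % n] x = x := by
          have : IsPeriodicPt S (k % n) x := IsPeriodicPt.mod hk hp
          exact this
        have := h (Set.mem_Iio.2 (Nat.mod_lt k hn)) (Set.mem_Iio.2 hn) (by simpa using hm)
        exact Nat.dvd_of_mod_eq_zero this
      · rintro ⟨m, rfl⟩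
        exact hp.mul_const m
  have hfin : ∀ x, S^[n] x = x → (({y | ∃ k < n, S^[k] x = y}.ncard = n) ↔
      (∀ k, S^[k] x = x ↔ n ∣ k)) := by
    intro x hx
    rw [hinj x hx, himg]
    constructor
    · intro h
      refine Set.injOn_of_ncard_image_eq ?_ (Set.finite_Iio n)
      rw [h]
      simp
    · intro h
      rw [h.ncard_image]
      simp
  have hper : ∀ i, S^[n] (r i) = r i := fun i => (h1 i n).2 dvd_rfl
  unfold numOrb
  symm
  refine Nat.card_congr (Equiv.ofBijective
    (fun i => ⟨{y | ∃ k < n, S^[k] (r i) = y}, r i, hper i, rfl,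
      (hfin _ (hper i)).2 (h1 i)⟩) ⟨?_, ?_⟩)
  · intro i j hij
    have hij' : {y | ∃ k < n, S^[k] (r i) = y} = {y | ∃ k < n, S^[k] (r j) = y} :=
      congrArg Subtype.val hij
    have : r j ∈ {y | ∃ k < n, S^[k] (r i) = y} := by
      rw [hij']
      exact ⟨0, hn, rfl⟩
    obtain ⟨k, _, hk⟩ := this
    exact h2 i j k hk
  · rintro ⟨τ, x, hx, rfl, hcard⟩
    obtain ⟨i, k, hk⟩ := h3 x ((hfin x hx).1 hcard)
    refine ⟨i, Subtype.ext ?_⟩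
    have hri : IsPeriodicPt S n (r i) := hper i
    have hxp : IsPeriodicPt S n x := hx
    ext y
    simp only [Set.mem_ofPred_eq]
    constructor
    · rintro ⟨l, hl, rfl⟩
      refine ⟨(l + (n - 1) * k) % n, Nat.mod_lt _ hn, ?_⟩
      rw [hxp.iterate_mod_apply, ← hk, ← iterate_add_apply]
      have : l + (n - 1) * k + k = l + n * k := by
        obtain ⟨m, rfl⟩ : ∃ m, n = m + 1 := ⟨n - 1, by omega⟩
        simp
        ring
      rw [this, iterate_add_apply, (hri.mul_const k).eq]
    · rintro ⟨l, hl, rfl⟩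
      refine ⟨(l + k) % n, Nat.mod_lt _ hn, ?_⟩
      rw [hri.iterate_mod_apply, iterate_add_apply, hk]

/-! ### The system -/

/-- The discrete set of non-trivial points. -/
def Pts (b e : ℕ → ℕ) : Type := Σ n : ℕ, (Fin (b n) × Bool ⊕ Fin (e n)) × ZMod n

lemma countable_zmod (n : ℕ) : Countable (ZMod n) := by
  cases n with
  | zero => exact inferInstanceAs (Countable ℤ)
  | succ n => exact inferInstanceAs (Countable (Fin (n + 1)))

instance (b e : ℕ → ℕ) : Countable (Pts b e) := by
  have := countable_zmod
  unfold Pts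
  infer_instance

instance (b e : ℕ → ℕ) : TopologicalSpace (Pts b e) := ⊥

instance (b e : ℕ → ℕ) : DiscreteTopology (Pts b e) := ⟨rfl⟩

/-- The shift on the discrete points. -/
def shiftP (b e : ℕ → ℕ) : Pts b e ≃ Pts b e where
  toFun p := ⟨p.1, p.2.1, p.2.2 + 1⟩
  invFun p := ⟨p.1, p.2.1, p.2.2 - 1⟩
  left_inv p := by
    obtain ⟨n, i, x⟩ := p
    simp
    rfl
  right_inv p := by
    obtain ⟨n, i, x⟩ := p
    simp
    rfl

/-- The involution on the discrete points. -/
def invP (b e : ℕ → ℕ) : Pts b e → Pts b e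
  | ⟨n, Sum.inl (i, s), x⟩ => ⟨n, Sum.inl (i, !s), x⟩
  | ⟨n, Sum.inr i, x⟩ => ⟨n, Sum.inr i, x + ((n / 2 : ℕ) : ZMod n)⟩

lemma invP_invP (b e : ℕ → ℕ) (he : ∀ n, e n ≠ 0 → Even n) (p : Pts b e) :
    invP b e (invP b e p) = p := by
  obtain ⟨n, (⟨i, s⟩ | i), x⟩ := p
  · simp [invP]
    rfl
  · have hn : Even n := he n (by
      have := i.2
      omega)
    have h : ((n / 2 : ℕ) : ZMod n) + ((n / 2 : ℕ) : ZMod n) = 0 := by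
      rw [← Nat.cast_add]
      obtain ⟨m, rfl⟩ := hn
      have e1 : (m + m) / 2 = m := by omega
      rw [e1]
      exact ZMod.natCast_self _
    simp [invP, add_assoc, h]
    rfl

lemma invP_shiftP (b e : ℕ → ℕ) (p : Pts b e) :
    invP b e (shiftP b e p) = shiftP b e (invP b e p) := by
  obtain ⟨n, (⟨i, s⟩ | i), x⟩ := p
  · rfl
  · change (⟨n, Sum.inr i, x + 1 + ((n / 2 : ℕ) : ZMod n)⟩ : Pts b e) =
      ⟨n, Sum.inr i, x + ((n / 2 : ℕ) : ZMod n) + 1⟩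
    rw [add_right_comm]

lemma metrizable_onePoint (Y : Type) [TopologicalSpace Y] [DiscreteTopology Y] [Countable Y] :
    TopologicalSpace.MetrizableSpace (OnePoint Y) := by
  obtain ⟨g, hg⟩ := exists_injective_nat Y
  let f : OnePoint Y → ℝ := fun x => OnePoint.elim x (0 : ℝ) (fun y => 1 / ((g y : ℝ) + 1))
  have hcont : Continuous f := by
    rw [OnePoint.continuous_iff]
    refine ⟨?_, continuous_of_discreteTopology⟩
    have h1 : Filter.Tendsto g (Filter.coclosedCompact Y) Filter.atTop := by
      have := hg.tendsto_cofinite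
      rw [Nat.cofinite_eq_atTop] at this
      simpa [Filter.cocompact_eq_cofinite] using this
    exact tendsto_one_div_add_atTop_nhds_zero_nat.comp h1
  have hinj : Function.Injective f := by
    intro x y hxy
    induction x using OnePoint.rec with
    | infty =>
      induction y using OnePoint.rec with
      | infty => rfl
      | coe y =>
        have h : (0 : ℝ) = 1 / ((g y : ℝ) + 1) := hxy
        have : (0 : ℝ) < 1 / ((g y : ℝ) + 1) := by positivity
        linarith
    | coe x =>
      induction y using OnePoint.rec with
      | infty =>
        have h : 1 / ((g x : ℝ) + 1) = (0 : ℝ) := hxy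
        have : (0 : ℝ) < 1 / ((g x : ℝ) + 1) := by positivity
        linarith
      | coe y =>
        have h : 1 / ((g x : ℝ) + 1) = 1 / ((g y : ℝ) + 1) := hxy
        have h' : ((g x : ℝ) + 1) = ((g y : ℝ) + 1) := by
          simpa using h
        have : g x = g y := by
          have := add_right_cancel h'
          exact_mod_cast this
        rw [hg this]
  exact (hcont.isClosedEmbedding hinj).isEmbedding.metrizableSpace

/-- A point of `Pts`. -/
def mkP {b e : ℕ → ℕ} (n : ℕ) (i : Fin (b n) × Bool ⊕ Fin (e n)) (x : ZMod n) :
    OnePoint (Pts b e) := OnePoint.some (X := Pts b e) ⟨n, i, x⟩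

lemma mkP_fst {b e : ℕ → ℕ} {n m : ℕ} {i : Fin (b n) × Bool ⊕ Fin (e n)} {x : ZMod n}
    {j : Fin (b m) × Bool ⊕ Fin (e m)} {y : ZMod m}
    (h : (mkP n i x : OnePoint (Pts b e)) = mkP m j y) : n = m := by
  have := OnePoint.coe_injective h
  exact congrArg Sigma.fst this

lemma mkP_inj {b e : ℕ → ℕ} {n : ℕ} {i j : Fin (b n) × Bool ⊕ Fin (e n)} {x y : ZMod n} :
    (mkP n i x : OnePoint (Pts b e)) = mkP n j y ↔ i = j ∧ x = y := by
  constructor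
  · intro h
    have := OnePoint.coe_injective h
    have h2 := eq_of_heq (Sigma.mk.inj this).2
    exact Prod.mk.inj h2
  · rintro ⟨rfl, rfl⟩
    rfl

lemma pts_cases {b e : ℕ → ℕ} (x : OnePoint (Pts b e)) :
    x = OnePoint.infty ∨ ∃ n i y, x = mkP n i y := by
  induction x using OnePoint.rec with
  | infty => exact Or.inl rfl
  | coe p =>
    obtain ⟨n, i, y⟩ := p
    exact Or.inr ⟨n, i, y, rfl⟩

/-- The map of the system. -/
def mapT (b e : ℕ → ℕ) : OnePoint (Pts b e) → OnePoint (Pts b e) := OnePoint.map (shiftP b e)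

/-- The involution of the system. -/
def mapI (b e : ℕ → ℕ) : OnePoint (Pts b e) → OnePoint (Pts b e) := OnePoint.map (invP b e)

lemma mapT_mkP {b e : ℕ → ℕ} (n : ℕ) (i : Fin (b n) × Bool ⊕ Fin (e n)) (x : ZMod n) :
    mapT b e (mkP n i x) = mkP n i (x + 1) := rfl

lemma mapI_inl {b e : ℕ → ℕ} (n : ℕ) (i : Fin (b n)) (s : Bool) (x : ZMod n) :
    mapI b e (mkP n (Sum.inl (i, s)) x) = mkP n (Sum.inl (i, !s)) x := rfl

lemma mapI_inr {b e : ℕ → ℕ} (n : ℕ) (i : Fin (e n)) (x : ZMod n) :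
    mapI b e (mkP n (Sum.inr i) x) = mkP n (Sum.inr i) (x + ((n / 2 : ℕ) : ZMod n)) := rfl

lemma mapT_iterate {b e : ℕ → ℕ} (n : ℕ) (i : Fin (b n) × Bool ⊕ Fin (e n)) (x : ZMod n)
    (k : ℕ) : (mapT b e)^[k] (mkP n i x) = mkP n i (x + k) := by
  induction k with
  | zero => simp
  | succ k ih =>
    rw [iterate_succ_apply', ih, mapT_mkP]
    push_cast
    rw [add_assoc]

lemma mapT_iterate_infty {b e : ℕ → ℕ} (k : ℕ) :
    (mapT b e)^[k] OnePoint.infty = OnePoint.infty := by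
  induction k with
  | zero => simp
  | succ k ih =>
    rw [iterate_succ_apply', ih]
    rfl

lemma mapT_iterate_eq {b e : ℕ → ℕ} (n : ℕ) (i : Fin (b n) × Bool ⊕ Fin (e n)) (x : ZMod n)
    (k : ℕ) : (mapT b e)^[k] (mkP n i x) = mkP n i x ↔ n ∣ k := by
  rw [mapT_iterate, mkP_inj]
  simp [ZMod.natCast_eq_zero_iff]

lemma mapI_mapI (b e : ℕ → ℕ) (he : ∀ n, e n ≠ 0 → Even n) (x : OnePoint (Pts b e)) :
    mapI b e (mapI b e x) = x := by
  induction x using OnePoint.rec with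
  | infty => rfl
  | coe p => exact congrArg OnePoint.some (invP_invP b e he p)

lemma mapI_mapT (b e : ℕ → ℕ) (x : OnePoint (Pts b e)) :
    mapI b e (mapT b e x) = mapT b e (mapI b e x) := by
  induction x using OnePoint.rec with
  | infty => rfl
  | coe p => exact congrArg OnePoint.some (invP_shiftP b e p)

lemma finite_periodic (b e : ℕ → ℕ) (n : ℕ) (hn : 1 ≤ n) :
    {x | (mapT b e)^[n] x = x}.Finite := by
  have hfin : ({OnePoint.infty} ∪ ⋃ m ∈ Set.Icc 1 n,
      Set.range (fun q : (Fin (b m) × Bool ⊕ Fin (e m)) × ZMod m =>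
        (mkP m q.1 q.2 : OnePoint (Pts b e)))).Finite := by
    refine (Set.finite_singleton _).union ((Set.finite_Icc 1 n).biUnion fun m hm => ?_)
    have : NeZero m := ⟨by
      have := hm.1
      omega⟩
    exact Set.finite_range _
  refine hfin.subset fun x hx => ?_
  rcases pts_cases x with rfl | ⟨m, i, y, rfl⟩
  · exact Or.inl rfl
  · right
    have hd : m ∣ n := (mapT_iterate_eq m i y n).1 hx
    have h1 : m ∈ Set.Icc 1 n := ⟨Nat.pos_of_dvd_of_pos hd hn, Nat.le_of_dvd hn hd⟩
    exact Set.mem_biUnion h1 ⟨(i, y), rfl⟩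

lemma exists_natCast {n : ℕ} (hn : 1 ≤ n) (x : ZMod n) : ∃ k : ℕ, (k : ZMod n) = x := by
  have : NeZero n := ⟨by omega⟩
  exact ZMod.natCast_zmod_surjective x

lemma eq_of_dvd_iff {m n : ℕ} (h : ∀ k, m ∣ k ↔ n ∣ k) : m = n :=
  Nat.dvd_antisymm ((h n).2 dvd_rfl) ((h m).1 dvd_rfl)

lemma numOrb_mapT (b e : ℕ → ℕ) (n : ℕ) (hn : 2 ≤ n) :
    numOrb (mapT b e) n = 2 * b n + e n := by
  rw [numOrb_eq_card (mapT b e) n (by omega) (fun i => mkP n i 0)]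
  · simp [mul_comm]
  · intro i k
    exact mapT_iterate_eq n i 0 k
  · intro i j k h
    rw [mapT_iterate, mkP_inj] at h
    exact h.1
  · intro x hx
    rcases pts_cases x with rfl | ⟨m, i, y, rfl⟩
    · have := Nat.le_of_dvd one_pos ((hx 1).1 (mapT_iterate_infty 1))
      omega
    · have : m = n := eq_of_dvd_iff fun k => by rw [← hx k, mapT_iterate_eq]
      subst this
      obtain ⟨k, hk⟩ := exists_natCast (by omega) y
      refine ⟨i, k, ?_⟩
      rw [mapT_iterate, mkP_inj]
      simp [hk]

lemma halfProj_eq {X : Type*} (ι : X → X) (h : ∀ x, ι (ι x) = x) (x y : X) :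
    halfProj ι x = halfProj ι y ↔ x = y ∨ ι x = y := by
  constructor
  · intro hxy
    let f : HalfQuot ι → Set X := Quot.lift (fun x => {x, ι x}) (by
      rintro a _ rfl
      simp only [h]
      exact Set.pair_comm _ _)
    have h1 : ({x, ι x} : Set X) = {y, ι y} := congrArg f hxy
    have h2 : y ∈ ({x, ι x} : Set X) := by
      rw [h1]
      simp
    rcases h2 with h2 | h2
    · exact Or.inl h2.symm
    · exact Or.inr (Set.mem_singleton_iff.1 h2).symm
  · rintro (rfl | h)
    · rfl
    · exact Quot.sound h

/-- The induced map on the quotient. -/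
def mapBar (b e : ℕ → ℕ) : HalfQuot (mapI b e) → HalfQuot (mapI b e) :=
  Quot.map (mapT b e) (by
    rintro x _ rfl
    exact mapI_mapT b e x)

lemma mapBar_iterate (b e : ℕ → ℕ) (k : ℕ) (x : OnePoint (Pts b e)) :
    (mapBar b e)^[k] (halfProj (mapI b e) x) = halfProj (mapI b e) ((mapT b e)^[k] x) := by
  induction k with
  | zero => rfl
  | succ k ih =>
    rw [iterate_succ_apply', ih, iterate_succ_apply']
    rfl

lemma mapBar_inl (b e : ℕ → ℕ) (he : ∀ n, e n ≠ 0 → Even n) (n : ℕ) (i : Fin (b n)) (s : Bool)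
    (y : ZMod n) (k : ℕ) :
    (mapBar b e)^[k] (halfProj (mapI b e) (mkP n (Sum.inl (i, s)) y)) =
      halfProj (mapI b e) (mkP n (Sum.inl (i, s)) y) ↔ n ∣ k := by
  rw [mapBar_iterate, halfProj_eq _ (mapI_mapI b e he), mapT_iterate, mapI_inl, mkP_inj, mkP_inj]
  simp [ZMod.natCast_eq_zero_iff]

lemma mapBar_inr (b e : ℕ → ℕ) (he : ∀ n, e n ≠ 0 → Even n) (n : ℕ) (i : Fin (e (2 * n)))
    (y : ZMod (2 * n)) (k : ℕ) :
    (mapBar b e)^[k] (halfProj (mapI b e) (mkP (2 * n) (Sum.inr i) y)) =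
      halfProj (mapI b e) (mkP (2 * n) (Sum.inr i) y) ↔ n ∣ k := by
  rw [mapBar_iterate, halfProj_eq _ (mapI_mapI b e he), mapT_iterate, mapI_inr, mkP_inj, mkP_inj]
  have h2n : 2 * n / 2 = n := by omega
  rw [h2n, add_assoc, ← Nat.cast_add]
  simp only [add_eq_left, ZMod.natCast_eq_zero_iff, true_and]
  constructor
  · rintro (h | h)
    · exact (Dvd.intro_left 2 rfl).trans h
    · exact (Nat.dvd_add_left dvd_rfl).1 ((Dvd.intro_left 2 rfl).trans h)
  · rintro ⟨m, rfl⟩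
    rcases Nat.even_or_odd m with ⟨q, rfl⟩ | ⟨q, rfl⟩
    · left
      exact ⟨q, by ring⟩
    · right
      exact ⟨q + 1, by ring⟩

lemma numOrb_mapBar (b e : ℕ → ℕ) (he : ∀ n, e n ≠ 0 → Even n) (n : ℕ) (hn : 2 ≤ n) :
    numOrb (mapBar b e) n = b n + e (2 * n) := by
  rw [numOrb_eq_card (I := Fin (b n) ⊕ Fin (e (2 * n))) (mapBar b e) n (by omega)
    (Sum.elim (fun i => halfProj (mapI b e) (mkP n (Sum.inl (i, false)) 0))
      (fun i => halfProj (mapI b e) (mkP (2 * n) (Sum.inr i) 0)))]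
  · simp
  · rintro (i | i) k
    · exact mapBar_inl b e he n i false 0 k
    · exact mapBar_inr b e he n i 0 k
  · rintro (i | i) (j | j) k h
    · simp only [Sum.elim_inl] at h
      rw [mapBar_iterate, halfProj_eq _ (mapI_mapI b e he), mapT_iterate, mapI_inl, mkP_inj,
        mkP_inj] at h
      simp at h
      rw [h.1]
    · simp only [Sum.elim_inl, Sum.elim_inr] at h
      rw [mapBar_iterate, halfProj_eq _ (mapI_mapI b e he), mapT_iterate, mapI_inl] at h
      rcases h with h | h
      · have := mkP_fst h
        omega
      · have := mkP_fst h
        omega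
    · simp only [Sum.elim_inl, Sum.elim_inr] at h
      rw [mapBar_iterate, halfProj_eq _ (mapI_mapI b e he), mapT_iterate, mapI_inr] at h
      rcases h with h | h
      · have := mkP_fst h
        omega
      · have := mkP_fst h
        omega
    · simp only [Sum.elim_inr] at h
      rw [mapBar_iterate, halfProj_eq _ (mapI_mapI b e he), mapT_iterate, mapI_inr, mkP_inj,
        mkP_inj] at h
      rcases h with h | h
      · exact congrArg Sum.inr (Sum.inr.inj h.1)
      · exact congrArg Sum.inr (Sum.inr.inj h.1)
  · intro x hx
    induction x using Quot.ind with
    | mk x =>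
    rcases pts_cases x with rfl | ⟨m, (⟨i, s⟩ | i), y, rfl⟩
    · have h1 := (hx 1).1 (by
        change (mapBar b e)^[1] (halfProj (mapI b e) _) = _
        rw [mapBar_iterate, mapT_iterate_infty])
      have := Nat.le_of_dvd one_pos h1
      omega
    · have : m = n := eq_of_dvd_iff fun k => by
        rw [← hx k]
        exact (mapBar_inl b e he m i s y k).symm
      subst this
      obtain ⟨k, hk⟩ := exists_natCast (by omega) y
      refine ⟨Sum.inl i, k, ?_⟩
      change (mapBar b e)^[k] (halfProj (mapI b e) _) = halfProj (mapI b e) _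
      rw [mapBar_iterate, halfProj_eq _ (mapI_mapI b e he), mapT_iterate, mapI_inl, mkP_inj,
        mkP_inj]
      cases s <;> simp [hk]
    · obtain ⟨q, hq⟩ := he m (by
        have := i.2
        omega)
      obtain rfl : m = 2 * q := by omega
      have : q = n := eq_of_dvd_iff fun k => by
        rw [← hx k]
        exact (mapBar_inr b e he q i y k).symm
      subst this
      obtain ⟨k, hk⟩ := exists_natCast (by omega) y
      refine ⟨Sum.inr i, k, ?_⟩
      change (mapBar b e)^[k] (halfProj (mapI b e) _) = halfProj (mapI b e) _
      rw [mapBar_iterate, mapT_iterate, zero_add, hk]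

/-- The map of the system, as a homeomorphism. -/
def homT (b e : ℕ → ℕ) : OnePoint (Pts b e) ≃ₜ OnePoint (Pts b e) :=
  (Homeomorph.mk (shiftP b e) continuous_of_discreteTopology
    continuous_of_discreteTopology).onePointCongr

lemma coe_homT (b e : ℕ → ℕ) : ⇑(homT b e) = mapT b e := rfl

lemma continuous_mapI (b e : ℕ → ℕ) (he : ∀ n, e n ≠ 0 → Even n) : Continuous (mapI b e) := by
  let E : Pts b e ≃ Pts b e := ⟨invP b e, invP b e, invP_invP b e he, invP_invP b e he⟩
  exact (Homeomorph.mk E continuous_of_discreteTopology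
    continuous_of_discreteTopology).onePointCongr.continuous

theorem statement13 (lam eta c : ℝ) (hlam : 1 < lam) (heta : 0 < eta) (hc : 0 < c)
    (hcase : (eta = lam ∧ (1 / 2 : ℝ) ≤ c) ∨ (lam < eta ∧ eta < lam ^ 2) ∨
      (eta = lam ^ 2 ∧ c ≤ 1)) :
    ∃ (X : Type) (_ : MetricSpace X) (_ : CompactSpace X) (T : X ≃ₜ X) (ι : X → X),
      Continuous ι ∧ ι ∘ ι = id ∧ ι ∘ ⇑T = ⇑T ∘ ι ∧ (∃ x : X, T x = x) ∧
      (∀ n : ℕ, 1 ≤ n → {x : X | (⇑T)^[n] x = x}.Finite) ∧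
      Filter.Tendsto (fun n : ℕ => (numOrb (⇑T) n : ℝ) / lam ^ n) Filter.atTop (nhds 1) ∧
      ∃ Tbar : HalfQuot ι → HalfQuot ι,
        (∀ x : X, Tbar (halfProj ι x) = halfProj ι (T x)) ∧
        Filter.Tendsto (fun n : ℕ => (numOrb Tbar n : ℝ) / (c * eta ^ n))
          Filter.atTop (nhds 1) := by
  obtain ⟨b, e, he, h1, h2⟩ := exists_seqs lam eta c hlam hc hcase
  have := metrizable_onePoint (Pts b e)
  letI : MetricSpace (OnePoint (Pts b e)) := TopologicalSpace.metrizableSpaceMetric _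
  refine ⟨OnePoint (Pts b e), inferInstance, inferInstance, homT b e, mapI b e,
    continuous_mapI b e he, funext (mapI_mapI b e he), funext (mapI_mapT b e),
    ⟨OnePoint.infty, rfl⟩, fun n hn => finite_periodic b e n hn, ?_,
    mapBar b e, fun x => rfl, ?_⟩
  · refine h1.congr' ?_
    filter_upwards [Filter.eventually_ge_atTop 2] with n hn
    rw [coe_homT, numOrb_mapT b e n hn]
  · refine h2.congr' ?_
    filter_upwards [Filter.eventually_ge_atTop 2] with n hn
    rw [numOrb_mapBar b e he n hn]
end
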